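/- The dual cone of the PPT cone is the cone of decomposable operators: for a Hermitian matrix M indexed by (Fin d × Fin n), one has Re Tr(M · a) ≥ 0 for every matrix a indexed by (Fin d × Fin n) with a and Γ(a) both PSD, if and only if there exist PSD matrices P and Q indexed by (Fin d × Fin n) with M = P + Γ(Q). -/

import Mathlib

/-!
Write `K` for the convex cone of matrices `P + Γ(Q)` with `P`, `Q` PSD. That `K` lies in the dual of
the PPT cone is the positivity of `Tr(P a)` for PSD `P`, `a`, because `Γ` is self-adjoint for the
trace pairing (`trace_ptrans_mul`).

Conversely, `K` is closed (`isClosed_decompCone`): `Γ` preserves the trace, so near a given matrix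
the elements of `K` have summands of bounded trace, and these range over a compact set. If a
Hermitian `M` is not in `K`, Hahn-Banach gives a real functional that is nonnegative on `K` and
negative at `M`; on Hermitian matrices it is `X ↦ Re Tr(X a)` for some Hermitian `a`
(`exists_hermitian_repr`). Evaluating it at `x xᴴ` and at `Γ(x xᴴ)` shows that `a` and `Γ(a)` are PSD,
while `Re Tr(M a) < 0`.
-/


open Matrix ComplexOrder

/-- Partial transpose on the second factor: `Γ(a)((i,k),(j,l)) = a((i,l),(j,k))`. -/
def ptrans (d n : ℕ) (a : Matrix (Fin d × Fin n) (Fin d × Fin n) ℂ) :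
    Matrix (Fin d × Fin n) (Fin d × Fin n) ℂ :=
  Matrix.of fun p q => a (p.1, q.2) (q.1, p.2)

lemma ptrans_add (d n : ℕ) (A B : Matrix (Fin d × Fin n) (Fin d × Fin n) ℂ) :
    ptrans d n (A + B) = ptrans d n A + ptrans d n B := rfl

lemma trace_ptrans (d n : ℕ) (A : Matrix (Fin d × Fin n) (Fin d × Fin n) ℂ) :
    (ptrans d n A).trace = A.trace := rfl

lemma ptrans_isHermitian {d n : ℕ} {A : Matrix (Fin d × Fin n) (Fin d × Fin n) ℂ}
    (hA : A.IsHermitian) : (ptrans d n A).IsHermitian := by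
  ext p q
  simpa [ptrans] using hA.apply (p.1, q.2) (q.1, p.2)

/-- `Γ` is self-adjoint for the trace pairing. -/
lemma trace_ptrans_mul (d n : ℕ) (A B : Matrix (Fin d × Fin n) (Fin d × Fin n) ℂ) :
    (ptrans d n A * B).trace = (A * ptrans d n B).trace := by
  simp only [Matrix.trace, Matrix.diag, Matrix.mul_apply, ptrans, Matrix.of_apply,
    Fintype.sum_prod_type]
  refine Finset.sum_congr rfl fun i _ => ?_
  rw [Finset.sum_comm]
  conv_rhs => rw [Finset.sum_comm]
  refine Finset.sum_congr rfl fun j _ => ?_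
  exact Finset.sum_comm

lemma continuous_ptrans (d n : ℕ) : Continuous (ptrans d n) :=
  continuous_pi fun _ => continuous_pi fun _ => continuous_apply_apply _ _

open scoped MatrixOrder Matrix.Norms.L2Operator in
lemma exists_factor {ι : Type*} [Fintype ι] {P : Matrix ι ι ℂ} (hP : P.PosSemidef) :
    ∃ B : Matrix ι ι ℂ, P = Bᴴ * B := by
  classical
  exact CStarAlgebra.nonneg_iff_eq_star_mul_self.mp hP.nonneg

/-- The PSD cone is contained in its own dual for the trace pairing. -/
lemma trace_mul_re_nonneg {ι : Type*} [Fintype ι] {P a : Matrix ι ι ℂ}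
    (hP : P.PosSemidef) (ha : a.PosSemidef) : 0 ≤ ((P * a).trace).re := by
  obtain ⟨B, rfl⟩ := exists_factor hP
  rw [Matrix.mul_assoc, Matrix.trace_mul_comm]
  exact (Complex.nonneg_iff.mp (ha.mul_mul_conjTranspose_same B).trace_nonneg).1

lemma re_trace_conjTranspose_mul_self {ι : Type*} [Fintype ι] (B : Matrix ι ι ℂ) :
    ((Bᴴ * B).trace).re = ∑ i, ∑ j, ‖B j i‖ ^ 2 := by
  simp only [Matrix.trace, Matrix.diag, Matrix.mul_apply, Complex.re_sum,
    Matrix.conjTranspose_apply]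
  refine Finset.sum_congr rfl fun i _ => Finset.sum_congr rfl fun j _ => ?_
  rw [Complex.sq_norm, Complex.normSq_apply]
  simp

lemma norm_le_of_re_trace_le {ι : Type*} [Fintype ι] {B : Matrix ι ι ℂ} {C : ℝ}
    (h : ((Bᴴ * B).trace).re ≤ C) (i j : ι) : ‖B i j‖ ≤ √C := by
  refine Real.le_sqrt_of_sq_le (le_trans ?_ h)
  rw [re_trace_conjTranspose_mul_self]
  refine le_trans ?_ (Finset.single_le_sum (f := fun j => ∑ i, ‖B i j‖ ^ 2)
    (fun _ _ => by positivity) (Finset.mem_univ j))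
  exact Finset.single_le_sum (f := fun i => ‖B i j‖ ^ 2)
    (fun _ _ => by positivity) (Finset.mem_univ i)

/-- The convex cone of decomposable matrices `P + Γ(Q)` with `P`, `Q` PSD, as a pointed cone in the
real vector space of complex matrices. -/
def decompCone (d n : ℕ) : PointedCone ℝ (Matrix (Fin d × Fin n) (Fin d × Fin n) ℂ) where
  carrier := {M | ∃ P Q : Matrix (Fin d × Fin n) (Fin d × Fin n) ℂ,
    P.PosSemidef ∧ Q.PosSemidef ∧ M = P + ptrans d n Q}
  zero_mem' := ⟨0, 0, .zero, .zero, by ext; simp [ptrans]⟩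
  add_mem' := by
    rintro _ _ ⟨P, Q, hP, hQ, rfl⟩ ⟨P', Q', hP', hQ', rfl⟩
    exact ⟨P + P', Q + Q', hP.add hP', hQ.add hQ', by rw [ptrans_add]; abel⟩
  smul_mem' := by
    rintro ⟨c, hc⟩ _ ⟨P, Q, hP, hQ, rfl⟩
    exact ⟨c • P, c • Q, hP.smul hc, hQ.smul hc, smul_add c P (ptrans d n Q)⟩

/-- Since `Tr (P + Γ(Q)) = Tr P + Tr Q`, the decomposable matrices of bounded trace come from a
compact set of factors, which makes the cone closed. -/
lemma isClosed_decompCone (d n : ℕ) :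
    IsClosed (decompCone d n : Set (Matrix (Fin d × Fin n) (Fin d × Fin n) ℂ)) := by
  refine isClosed_of_closure_subset fun M hM => ?_
  set C : ℝ := M.trace.re + 1 with hC
  let S : Set (Matrix (Fin d × Fin n) (Fin d × Fin n) ℂ) :=
    Set.univ.pi fun _ => Set.univ.pi fun _ => Metric.closedBall 0 (√C)
  have hS : IsCompact S :=
    isCompact_univ_pi fun _ => isCompact_univ_pi fun _ => isCompact_closedBall _ _
  let g : Matrix (Fin d × Fin n) (Fin d × Fin n) ℂ × Matrix (Fin d × Fin n) (Fin d × Fin n) ℂ →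
      Matrix (Fin d × Fin n) (Fin d × Fin n) ℂ :=
    fun x => x.1ᴴ * x.1 + ptrans d n (x.2ᴴ * x.2)
  have hg : Continuous g := by
    have h1 : Continuous fun B : Matrix (Fin d × Fin n) (Fin d × Fin n) ℂ => Bᴴ * B :=
      continuous_id.matrix_conjTranspose.matrix_mul continuous_id
    exact (h1.comp continuous_fst).add ((continuous_ptrans d n).comp (h1.comp continuous_snd))
  have hclosed : IsClosed (g '' (S ×ˢ S)) := ((hS.prod hS).image hg).isClosed
  let U : Set (Matrix (Fin d × Fin n) (Fin d × Fin n) ℂ) := {X | X.trace.re < C}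
  have hU : IsOpen U :=
    isOpen_lt (Complex.continuous_re.comp continuous_id.matrix_trace) continuous_const
  have hMU : M ∈ U := by simp [U, hC]
  -- Factors `BᴴB`, `DᴴD` of trace at most `C` have entries of modulus at most `√C`.
  have hsub : U ∩ (decompCone d n : Set _) ⊆ g '' (S ×ˢ S) := by
    rintro _ ⟨hX, P, Q, hP, hQ, rfl⟩
    have hP0 := (Complex.nonneg_iff.mp hP.trace_nonneg).1
    have hQ0 := (Complex.nonneg_iff.mp hQ.trace_nonneg).1
    simp only [U, Set.mem_ofPred_eq, Matrix.trace_add, trace_ptrans, Complex.add_re] at hX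
    obtain ⟨B, rfl⟩ := exists_factor hP
    obtain ⟨D, rfl⟩ := exists_factor hQ
    refine ⟨(B, D), ⟨fun i _ j _ => ?_, fun i _ j _ => ?_⟩, rfl⟩
    · exact mem_closedBall_zero_iff.mpr (norm_le_of_re_trace_le (by linarith) i j)
    · exact mem_closedBall_zero_iff.mpr (norm_le_of_re_trace_le (by linarith) i j)
  obtain ⟨⟨B, D⟩, -, hBD⟩ :=
    hclosed.closure_subset_iff.mpr hsub (hU.inter_closure ⟨hMU, hM⟩)
  exact ⟨_, _, Matrix.posSemidef_conjTranspose_mul_self B,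
    Matrix.posSemidef_conjTranspose_mul_self D, hBD.symm⟩

/-- Every real-linear functional on complex matrices agrees, on Hermitian matrices, with the trace
pairing against some Hermitian matrix. -/
lemma exists_hermitian_repr {ι : Type*} [Fintype ι] [DecidableEq ι]
    (f : Matrix ι ι ℂ →ₗ[ℝ] ℝ) :
    ∃ a : Matrix ι ι ℂ, a.IsHermitian ∧
      ∀ X : Matrix ι ι ℂ, X.IsHermitian → f X = ((X * a).trace).re := by
  -- The entries of `N` are read off from `f z = Re (z * (f 1 - i * f i))` in each coordinate.
  let N : Matrix ι ι ℂ := Matrix.of fun j i =>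
    ⟨f (Matrix.single i j 1), - f (Matrix.single i j Complex.I)⟩
  have hN : ∀ X, f X = ((X * N).trace).re := by
    intro X
    conv_lhs => rw [Matrix.matrix_eq_sum_single X]
    simp only [map_sum, Matrix.trace, Matrix.diag, Matrix.mul_apply, Complex.re_sum]
    refine Finset.sum_congr rfl fun i _ => Finset.sum_congr rfl fun j _ => ?_
    have h : Matrix.single i j (X i j) = (X i j).re • Matrix.single i j (1 : ℂ)
        + (X i j).im • Matrix.single i j Complex.I := by
      rw [Matrix.smul_single, Matrix.smul_single, ← Matrix.single_add]
      congr 1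
      apply Complex.ext <;> simp
    rw [h, map_add, map_smul, map_smul]
    simp [N]
  -- The skew-Hermitian part of `N` pairs to zero with Hermitian matrices.
  refine ⟨(1 / 2 : ℝ) • (N + Nᴴ), ?_, fun X hX => ?_⟩
  · ext i j
    simp [add_comm]
  · have h : ((X * Nᴴ).trace).re = ((X * N).trace).re := by
      rw [← Complex.conj_re, ← Complex.star_def, ← Matrix.trace_conjTranspose,
        Matrix.conjTranspose_mul, Matrix.conjTranspose_conjTranspose, hX.eq,
        Matrix.trace_mul_comm]
    rw [Matrix.mul_smul, Matrix.trace_smul, Complex.smul_re, Matrix.mul_add, Matrix.trace_add,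
      Complex.add_re, h, hN X, smul_eq_mul]
    ring

/-- A Hermitian matrix pairing nonnegatively with every `x xᴴ` is PSD. -/
lemma posSemidef_of_trace_vecMulVec {ι : Type*} [Fintype ι] {a : Matrix ι ι ℂ}
    (ha : a.IsHermitian)
    (h : ∀ x : ι → ℂ, 0 ≤ ((Matrix.vecMulVec x (star x) * a).trace).re) : a.PosSemidef := by
  refine .of_dotProduct_mulVec_nonneg ha fun x => Complex.nonneg_iff.mpr ⟨?_, ?_⟩
  · have := h x
    rwa [Matrix.vecMulVec_mul, Matrix.trace_vecMulVec, dotProduct_comm,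
      ← Matrix.dotProduct_mulVec] at this
  · exact (ha.im_star_dotProduct_mulVec_self x).symm

/-- The dual cone of the PPT cone is the cone of decomposable operators. -/
theorem dual_ppt_cone_eq_decomposable (d n : ℕ)
    (M : Matrix (Fin d × Fin n) (Fin d × Fin n) ℂ) (hM : M.IsHermitian) :
    (∀ a : Matrix (Fin d × Fin n) (Fin d × Fin n) ℂ,
      a.PosSemidef → (ptrans d n a).PosSemidef → 0 ≤ ((M * a).trace).re) ↔
    (∃ P Q : Matrix (Fin d × Fin n) (Fin d × Fin n) ℂ,
      P.PosSemidef ∧ Q.PosSemidef ∧ M = P + ptrans d n Q) := by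
  constructor
  · intro h
    by_contra hcon
    -- Instance search does not unfold `Matrix` to the underlying function type.
    have : LocallyConvexSpace ℝ (Matrix (Fin d × Fin n) (Fin d × Fin n) ℂ) :=
      inferInstanceAs (LocallyConvexSpace ℝ (Fin d × Fin n → Fin d × Fin n → ℂ))
    let K : ProperCone ℝ (Matrix (Fin d × Fin n) (Fin d × Fin n) ℂ) :=
      ⟨decompCone d n, isClosed_decompCone d n⟩
    obtain ⟨f, hf, hfM⟩ := K.hyperplane_separation_point (x₀ := M) hcon
    obtain ⟨a, ha, hfa⟩ := exists_hermitian_repr f.toLinearMap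
    have hpsd : a.PosSemidef := posSemidef_of_trace_vecMulVec ha fun x => by
      have hx := Matrix.posSemidef_vecMulVec_self_star x
      rw [← hfa _ hx.isHermitian]
      exact hf _ ⟨_, 0, hx, .zero, by ext; simp [ptrans]⟩
    have hppt : (ptrans d n a).PosSemidef :=
      posSemidef_of_trace_vecMulVec (ptrans_isHermitian ha) fun x => by
        have hx := Matrix.posSemidef_vecMulVec_self_star x
        rw [← trace_ptrans_mul, ← hfa _ (ptrans_isHermitian hx.isHermitian)]
        exact hf _ ⟨0, _, .zero, hx, (zero_add _).symm⟩
    have hnonneg := h a hpsd hppt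
    rw [← hfa M hM] at hnonneg
    exact absurd hnonneg (not_le.mpr hfM)
  · rintro ⟨P, Q, hP, hQ, rfl⟩ a ha hΓa
    rw [Matrix.add_mul, Matrix.trace_add, Complex.add_re, trace_ptrans_mul]
    exact add_nonneg (trace_mul_re_nonneg hP ha) (trace_mul_re_nonneg hQ hΓa)
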